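/- Let q be a complex number with 0 < |q| < 1 and fix a square root q^{1/2} of q. Let a be a complex number with |a| < 1 (and a ≠ 0). Then ∫₀^π h(cos θ; q^{1/2}) / h(cos θ; a) dθ = π (q^{1/2} a; q)_∞² / ((q; q)_∞ (a²; q)_∞). -/

import Mathlib

open Complex MeasureTheory

/-- The q-shifted factorial `(x; q)_∞ = ∏_{k=0}^∞ (1 - x q^k)`. -/
noncomputable def qp (q x : ℂ) : ℂ := ∏' k : ℕ, (1 - x * q ^ k)

/-- The finite q-shifted factorial `(x; q)_n = ∏_{k=0}^{n-1} (1 - x q^k)`. -/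
noncomputable def qpn (q x : ℂ) (n : ℕ) : ℂ := ∏ k ∈ Finset.range n, (1 - x * q ^ k)

/-- For `x = cos θ`, `h(x; λ) = (λ e^{iθ}; q)_∞ (λ e^{-iθ}; q)_∞`. -/
noncomputable def hh (q : ℂ) (θ : ℝ) (l : ℂ) : ℂ :=
  qp q (l * Complex.exp ((θ : ℂ) * Complex.I)) *
    qp q (l * Complex.exp (-((θ : ℂ) * Complex.I)))


lemma qp_summable (q x : ℂ) (hq : ‖q‖ < 1) : Summable fun k : ℕ => ‖-(x * q ^ k)‖ := by
  simpa using (summable_geometric_of_lt_one (norm_nonneg _) hq).mul_left ‖x‖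

lemma qp_step (q x : ℂ) (hq : ‖q‖ < 1) : qp q x = (1 - x) * qp q (q * x) := by
  unfold qp
  have h : Multipliable fun k : ℕ => (1 - x * q ^ (k + 1)) := by
    have := multipliable_one_add_of_summable (qp_summable q (q * x) hq)
    refine this.congr fun k => ?_
    ring
  rw [tprod_eq_zero_mul' (f := fun k : ℕ => 1 - x * q ^ k) h]
  simp only [pow_zero, mul_one]
  congr 1
  refine tprod_congr fun k => ?_
  ring

lemma qp_ne_zero (q x : ℂ) (hq : ‖q‖ < 1) (hx : ‖x‖ < 1) : qp q x ≠ 0 := by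
  unfold qp
  simp_rw [sub_eq_add_neg]
  refine tprod_one_add_ne_zero_of_summable (f := fun k : ℕ => -(x * q ^ k)) ?_ (qp_summable q x hq)
  intro k h
  have h1 : x * q ^ k = 1 := by linear_combination -h
  have h2 : ‖x * q ^ k‖ < 1 := by
    rw [norm_mul, norm_pow]
    calc ‖x‖ * ‖q‖ ^ k ≤ ‖x‖ * 1 := by
          gcongr
          exact pow_le_one₀ (norm_nonneg _) hq.le
      _ < 1 := by linarith
  rw [h1] at h2
  simp at h2

lemma qp_diff (q : ℂ) (hq : ‖q‖ < 1) : Differentiable ℂ (qp q) := by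
  intro x
  have hU : IsOpen (Metric.ball (0 : ℂ) (‖x‖ + 1)) := Metric.isOpen_ball
  have key : HasProdLocallyUniformlyOn (fun (k : ℕ) (y : ℂ) => 1 + -(y * q ^ k))
      (fun y => ∏' k : ℕ, (1 + -(y * q ^ k))) (Metric.ball (0 : ℂ) (‖x‖ + 1)) := by
    refine Summable.hasProdLocallyUniformlyOn_nat_one_add hU
      ((summable_geometric_of_lt_one (norm_nonneg _) hq).mul_left (‖x‖ + 1)) ?_ ?_
    · refine .of_forall fun n y hy => ?_
      rw [norm_neg, norm_mul, norm_pow]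
      have : ‖y‖ < ‖x‖ + 1 := by simpa using hy
      gcongr
    · intro n
      fun_prop
  have hd := key.differentiableOn (.of_forall fun s => by
    simpa [Finset.prod_fn] using
      DifferentiableOn.finsetProd (fun _ _ ↦ by fun_prop)) hU
  have := hd.differentiableAt (hU.mem_nhds (by simp : x ∈ Metric.ball (0 : ℂ) (‖x‖ + 1)))
  have e : qp q = fun y => ∏' k : ℕ, (1 + -(y * q ^ k)) := by
    funext y
    simp only [qp, sub_eq_add_neg]
  rw [e]
  exact this

lemma qp_cont (q : ℂ) (hq : ‖q‖ < 1) : Continuous (qp q) := (qp_diff q hq).continuous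

/-- the unit circle point -/
noncomputable def ee (θ : ℝ) : ℂ := Complex.exp ((θ : ℂ) * Complex.I)

lemma ee_norm (θ : ℝ) : ‖ee θ‖ = 1 := Complex.norm_exp_ofReal_mul_I θ

lemma ee_ne (θ : ℝ) : ee θ ≠ 0 := Complex.exp_ne_zero _

lemma ee_cont : Continuous ee := by unfold ee; fun_prop

lemma ee_neg (θ : ℝ) : ee (-θ) = (ee θ)⁻¹ := by
  unfold ee
  rw [← Complex.exp_neg]
  push_cast
  ring_nf

lemma ee_add (θ φ : ℝ) : ee (θ + φ) = ee θ * ee φ := by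
  unfold ee
  rw [← Complex.exp_add]
  push_cast
  ring_nf

lemma ee_two_pi : ee (2 * Real.pi) = 1 := by
  unfold ee
  push_cast
  exact Complex.exp_two_pi_mul_I

lemma ee_refl (θ : ℝ) : ee (2 * Real.pi - θ) = (ee θ)⁻¹ := by
  rw [sub_eq_add_neg, ee_add, ee_two_pi, ee_neg, one_mul]

lemma hh_eq (q : ℂ) (θ : ℝ) (l : ℂ) : hh q θ l = qp q (l * ee θ) * qp q (l * (ee θ)⁻¹) := by
  unfold hh ee
  rw [Complex.exp_neg]

lemma hh_refl (q : ℂ) (θ : ℝ) (l : ℂ) : hh q (2 * Real.pi - θ) l = hh q θ l := by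
  rw [hh_eq, hh_eq, ee_refl, inv_inv, mul_comm]

lemma hh_ne (q : ℂ) (hq : ‖q‖ < 1) (θ : ℝ) (l : ℂ) (hl : ‖l‖ < 1) : hh q θ l ≠ 0 := by
  rw [hh_eq]
  refine mul_ne_zero (qp_ne_zero _ _ hq ?_) (qp_ne_zero _ _ hq ?_) <;> simpa [ee_norm] using hl

lemma ff_cont (q u a : ℂ) (hq : ‖q‖ < 1) (ha : ‖a‖ < 1) :
    Continuous fun θ : ℝ => hh q θ u / hh q θ a := by
  have h : ∀ l : ℂ, Continuous fun θ : ℝ => hh q θ l := by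
    intro l
    have h := qp_cont q hq
    unfold hh
    fun_prop
  exact Continuous.div (h u) (h a) fun θ => hh_ne q hq θ a ha

/-- full-circle integral -/
noncomputable def II (q u a : ℂ) : ℂ := ∫ θ in (0:ℝ)..(2 * Real.pi), hh q θ u / hh q θ a

/-- first Fourier coefficient -/
noncomputable def JJ (q u a : ℂ) : ℂ :=
  ∫ θ in (0:ℝ)..(2 * Real.pi), hh q θ u / hh q θ a * (ee θ)⁻¹

lemma JJ_symm (q u a : ℂ) :
    ∫ θ in (0:ℝ)..(2 * Real.pi), hh q θ u / hh q θ a * ee θ = JJ q u a := by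
  have := intervalIntegral.integral_comp_sub_left (a := 0) (b := 2 * Real.pi)
    (fun θ : ℝ => hh q θ u / hh q θ a * ee θ) (2 * Real.pi)
  simp only [sub_self, sub_zero, hh_refl, ee_refl] at this
  rw [← this, JJ]

lemma II_half (q u a : ℂ) (hq : ‖q‖ < 1) (ha : ‖a‖ < 1) :
    II q u a = 2 * ∫ θ in (0:ℝ)..Real.pi, hh q θ u / hh q θ a := by
  have h := ff_cont q u a hq ha
  have := intervalIntegral.integral_comp_sub_left (a := 0) (b := Real.pi)
    (fun θ : ℝ => hh q θ u / hh q θ a) (2 * Real.pi)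
  simp only [sub_zero, hh_refl] at this
  rw [show 2 * Real.pi - Real.pi = Real.pi by ring] at this
  rw [II, ← intervalIntegral.integral_add_adjacent_intervals (b := Real.pi)
    (h.intervalIntegrable _ _) (h.intervalIntegrable _ _), ← this]
  ring

/-- shifted function on the annulus -/
noncomputable def gg (q u a w : ℂ) : ℂ :=
  qp q (u * w) * qp q (u * w⁻¹) / (qp q (a * w) * qp q (a * q * w⁻¹))

lemma gg_one (q u a : ℂ) (hq : ‖q‖ < 1) (ha : ‖a‖ < 1) (θ : ℝ) :
    gg q u a (ee θ) = hh q θ u / hh q θ a - a * (hh q θ u / hh q θ a * (ee θ)⁻¹) := by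
  have hn := hh_ne q hq θ a ha
  have h1 : hh q θ a = qp q (a * ee θ) * ((1 - a * (ee θ)⁻¹) * qp q (a * q * (ee θ)⁻¹)) := by
    rw [hh_eq, qp_step q (a * (ee θ)⁻¹) hq]
    ring_nf
  rw [h1] at hn
  have hn1 := left_ne_zero_of_mul hn
  have hn2 := left_ne_zero_of_mul (right_ne_zero_of_mul hn)
  have hn3 := right_ne_zero_of_mul (right_ne_zero_of_mul hn)
  rw [h1, hh_eq, gg]
  generalize (ee θ)⁻¹ = v at *
  generalize qp q (a * ee θ) = A at *
  generalize qp q (a * q * v) = B at *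
  obtain ⟨C, hC⟩ : ∃ C, C = 1 - a * v := ⟨_, rfl⟩
  rw [← hC] at hn2 ⊢
  field_simp
  rw [hC]
  ring

lemma gg_two (q u a : ℂ) (hq0 : 0 < ‖q‖) (hq : ‖q‖ < 1) (hu : u ^ 2 = q) (ha : ‖a‖ < 1) (θ : ℝ) :
    u * gg q u a (q * ee θ) = a * (hh q θ u / hh q θ a) - hh q θ u / hh q θ a * (ee θ)⁻¹ := by
  have hn := hh_ne q hq θ a ha
  have hq' : q ≠ 0 := norm_pos_iff.1 hq0
  have hu0 : u ≠ 0 := by rintro rfl; simp at hu; exact hq' hu.symm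
  have he := ee_ne θ
  have h1 : hh q θ a = ((1 - a * ee θ) * qp q (a * (q * ee θ))) * qp q (a * (ee θ)⁻¹) := by
    rw [hh_eq, qp_step q (a * (ee θ)) hq]
    ring_nf
  have h2 : hh q θ u = ((1 - u * ee θ) * qp q (u * (q * ee θ))) * qp q (u * (ee θ)⁻¹) := by
    rw [hh_eq, qp_step q (u * (ee θ)) hq]
    ring_nf
  have h3 : qp q (u * (q * ee θ)⁻¹) = (1 - u⁻¹ * (ee θ)⁻¹) * qp q (u * (ee θ)⁻¹) := by
    rw [qp_step q _ hq]
    congr 2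
    · rw [← hu]; field_simp
    · field_simp
  have h4 : a * q * (q * ee θ)⁻¹ = a * (ee θ)⁻¹ := by field_simp
  rw [h1] at hn
  have hn1 := left_ne_zero_of_mul (left_ne_zero_of_mul hn)
  have hn2 := right_ne_zero_of_mul (left_ne_zero_of_mul hn)
  have hn3 := right_ne_zero_of_mul hn
  rw [h1, h2, gg, h3, h4]
  generalize qp q (a * (ee θ)⁻¹) = A at *
  generalize qp q (u * (ee θ)⁻¹) = B at *
  generalize qp q (a * (q * ee θ)) = C at *
  generalize qp q (u * (q * ee θ)) = D at *
  generalize ee θ = z at *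
  obtain ⟨E, hE⟩ : ∃ E, E = 1 - a * z := ⟨_, rfl⟩
  rw [← hE] at hn1 ⊢
  field_simp
  rw [hE]
  ring

lemma gg_diffAt (q u a w : ℂ) (hq0 : 0 < ‖q‖) (hq : ‖q‖ < 1) (ha : ‖a‖ < 1)
    (h1 : ‖w‖ ≤ 1) (h2 : ‖q‖ ≤ ‖w‖) : DifferentiableAt ℂ (gg q u a) w := by
  have hd := qp_diff q hq
  have hw : w ≠ 0 := norm_pos_iff.1 (hq0.trans_le h2)
  have hw' : 0 < ‖w‖ := hq0.trans_le h2
  have n1 : qp q (a * w) ≠ 0 := by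
    apply qp_ne_zero _ _ hq
    rw [norm_mul]
    nlinarith [norm_nonneg a, norm_nonneg w]
  have n2 : qp q (a * q * w⁻¹) ≠ 0 := by
    apply qp_ne_zero _ _ hq
    rw [norm_mul, norm_mul, norm_inv, ← div_eq_mul_inv, div_lt_one hw']
    nlinarith [norm_nonneg a, norm_nonneg w]
  have hi : DifferentiableAt ℂ (fun w : ℂ => w⁻¹) w := differentiableAt_inv hw
  have d : ∀ b c : ℂ, DifferentiableAt ℂ (fun w : ℂ => qp q (b * w)) w := fun b c =>
    (hd _).comp w (by fun_prop)
  have d' : ∀ b : ℂ, DifferentiableAt ℂ (fun w : ℂ => qp q (b * w⁻¹)) w := fun b =>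
    (hd _).comp w (hi.const_mul b)
  exact ((d u 0).mul (d' u)).div ((d a 0).mul (d' (a * q))) (mul_ne_zero n1 n2)

lemma circ (f : ℂ → ℂ) (R : ℝ) (hR : 0 < R) :
    (∮ z in C(0, R), (z - 0)⁻¹ • f z) = I * ∫ θ in (0:ℝ)..(2 * Real.pi), f (R * ee θ) := by
  rw [circleIntegral, ← intervalIntegral.integral_const_mul]
  refine intervalIntegral.integral_congr fun θ _ => ?_
  have : (R : ℂ) ≠ 0 := by exact_mod_cast hR.ne'
  have he := ee_ne θ
  have hc : circleMap 0 R θ = R * ee θ := by simp [circleMap, ee]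
  simp only [deriv_circleMap, hc, smul_eq_mul, sub_zero]
  field_simp

lemma gg_int (q u a : ℂ) (hq0 : 0 < ‖q‖) (hq : ‖q‖ < 1) (ha : ‖a‖ < 1) :
    ∫ θ in (0:ℝ)..(2 * Real.pi), gg q u a (ee θ)
      = ∫ θ in (0:ℝ)..(2 * Real.pi), gg q u a (q * ee θ) := by
  have key := circleIntegral_sub_center_inv_smul_eq_of_differentiable_on_annulus_off_countable
    (c := 0) hq0 hq.le (f := gg q u a) (s := ∅) Set.countable_empty
    (fun w hw => by
      refine (gg_diffAt q u a w hq0 hq ha ?_ ?_).continuousAt.continuousWithinAt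
      · simpa using hw.1
      · simpa using hw.2)
    (fun w hw => by
      refine gg_diffAt q u a w hq0 hq ha ?_ ?_
      · have := hw.1.1
        simp at this
        exact this.le
      · have := hw.1.2
        simp at this
        exact this.le)
  rw [circ _ _ hq0, circ _ _ one_pos] at key
  have key := mul_left_cancel₀ I_ne_zero key
  simp only [ofReal_one, one_mul] at key
  rw [key]
  have hper : Function.Periodic (fun θ : ℝ => gg q u a (‖q‖ * ee θ)) (2 * Real.pi) := by
    intro θ
    simp only [ee_add, ee_two_pi, mul_one]
  have hqe : ∀ θ : ℝ, gg q u a (q * ee θ) = gg q u a (‖q‖ * ee (θ + arg q)) := by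
    intro θ
    congr 1
    rw [ee_add, mul_comm (ee θ), ← mul_assoc]
    congr 1
    exact (Complex.norm_mul_exp_arg_mul_I q).symm
  simp_rw [hqe]
  rw [intervalIntegral.integral_comp_add_right (fun θ : ℝ => gg q u a (‖q‖ * ee θ))]
  have := hper.intervalIntegral_add_eq 0 (arg q)
  rw [zero_add] at this
  rw [this]
  congr 1 <;> ring

lemma JJ_rel (q u a : ℂ) (hq0 : 0 < ‖q‖) (hq : ‖q‖ < 1) (hu : u ^ 2 = q) (ha : ‖a‖ < 1) :
    JJ q u a * (1 - u * a) = II q u a * (a - u) := by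
  have hf := ff_cont q u a hq ha
  have hi : Continuous fun θ : ℝ => (ee θ)⁻¹ := ee_cont.inv₀ ee_ne
  have h := gg_int q u a hq0 hq ha
  have c1 : Continuous fun θ : ℝ => hh q θ u / hh q θ a * (ee θ)⁻¹ := hf.mul hi
  have c2 : Continuous fun θ : ℝ => a * (hh q θ u / hh q θ a * (ee θ)⁻¹) :=
    continuous_const.mul c1
  have c3 : Continuous fun θ : ℝ => a * (hh q θ u / hh q θ a) := continuous_const.mul hf
  have e1 : ∫ θ in (0:ℝ)..(2 * Real.pi), gg q u a (ee θ) = II q u a - a * JJ q u a := by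
    simp_rw [gg_one q u a hq ha]
    rw [intervalIntegral.integral_sub (hf.intervalIntegrable _ _)
      (c2.intervalIntegrable _ _),
      intervalIntegral.integral_const_mul]
    rfl
  have e2 : u * ∫ θ in (0:ℝ)..(2 * Real.pi), gg q u a (q * ee θ) = a * II q u a - JJ q u a := by
    rw [← intervalIntegral.integral_const_mul]
    simp_rw [gg_two q u a hq0 hq hu ha]
    rw [intervalIntegral.integral_sub (c3.intervalIntegrable _ _)
      (c1.intervalIntegrable _ _),
      intervalIntegral.integral_const_mul]
    rfl
  rw [← h, e1] at e2
  linear_combination e2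

lemma II_rel (q u a : ℂ) (hq0 : 0 < ‖q‖) (hq : ‖q‖ < 1) (hu : u ^ 2 = q) (ha : ‖a‖ < 1) :
    II q u (q * a) * (1 - u * a) = II q u a * ((1 - a ^ 2) * (1 + u * a)) := by
  have hf := ff_cont q u a hq ha
  have hi : Continuous fun θ : ℝ => (ee θ)⁻¹ := ee_cont.inv₀ ee_ne
  have hp : ∀ θ : ℝ, hh q θ u / hh q θ (q * a) = (1 + a ^ 2) * (hh q θ u / hh q θ a)
      - a * (hh q θ u / hh q θ a * ee θ) - a * (hh q θ u / hh q θ a * (ee θ)⁻¹) := by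
    intro θ
    have hn := hh_ne q hq θ a ha
    have he := ee_ne θ
    have h1 : hh q θ a = (1 - a * ee θ) * (1 - a * (ee θ)⁻¹) * hh q θ (q * a) := by
      rw [hh_eq, hh_eq, qp_step q (a * (ee θ)) hq, qp_step q (a * (ee θ)⁻¹) hq]
      ring_nf
    have h2 : (1 - a * ee θ) * (1 - a * (ee θ)⁻¹) = 1 + a ^ 2 - a * ee θ - a * (ee θ)⁻¹ := by
      field_simp
      ring
    rw [h1] at hn
    have hn1 := left_ne_zero_of_mul hn
    have hn2 := right_ne_zero_of_mul hn
    rw [h1, h2]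
    rw [h2] at hn1
    generalize (ee θ)⁻¹ = v at *
    field_simp
  have e : II q u (q * a) = (1 + a ^ 2) * II q u a - a * JJ q u a - a * JJ q u a := by
    rw [II]
    simp_rw [hp]
    have c1 : Continuous fun θ : ℝ => (1 + a ^ 2) * (hh q θ u / hh q θ a) :=
      continuous_const.mul hf
    have c2 : Continuous fun θ : ℝ => a * (hh q θ u / hh q θ a * ee θ) :=
      continuous_const.mul (hf.mul ee_cont)
    have c3 : Continuous fun θ : ℝ => a * (hh q θ u / hh q θ a * (ee θ)⁻¹) :=
      continuous_const.mul (hf.mul hi)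
    have c4 : Continuous fun θ : ℝ => (1 + a ^ 2) * (hh q θ u / hh q θ a)
      - a * (hh q θ u / hh q θ a * ee θ) := c1.sub c2
    rw [intervalIntegral.integral_sub (c4.intervalIntegrable _ _) (c3.intervalIntegrable _ _),
      intervalIntegral.integral_sub (c1.intervalIntegrable _ _) (c2.intervalIntegrable _ _),
      intervalIntegral.integral_const_mul, intervalIntegral.integral_const_mul,
      intervalIntegral.integral_const_mul, JJ_symm]
    rfl
  rw [e]
  linear_combination (-2 * a) * JJ_rel q u a hq0 hq hu ha

/-- normalized integral -/
noncomputable def GG (q u a : ℂ) : ℂ := II q u a * qp q (a ^ 2) / qp q (u * a) ^ 2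

lemma GG_step (q u a : ℂ) (hq0 : 0 < ‖q‖) (hq : ‖q‖ < 1) (hu : u ^ 2 = q) (hu1 : ‖u‖ < 1)
    (ha : ‖a‖ < 1) : GG q u (q * a) = GG q u a := by
  have h := II_rel q u a hq0 hq hu ha
  have hua : ‖u * a‖ < 1 := by
    rw [norm_mul]; nlinarith [norm_nonneg a, norm_nonneg u]
  have n1 := qp_ne_zero q (u * a) hq hua
  have s1 := qp_step q (u * a) hq
  have s2 : qp q (a ^ 2) = (1 - a ^ 2) * ((1 - u ^ 2 * a ^ 2) * qp q ((q * a) ^ 2)) := by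
    rw [qp_step q (a ^ 2) hq, qp_step q (q * a ^ 2) hq, hu]
    ring_nf
  rw [s1] at n1
  have m1 := left_ne_zero_of_mul n1
  have m2 := right_ne_zero_of_mul n1
  have hI : II q u (q * a) = II q u a * ((1 - a ^ 2) * (1 + u * a)) / (1 - u * a) := by
    rw [eq_div_iff m1, h]
  rw [GG, GG, s1, s2, hI, show u * (q * a) = q * (u * a) by ring]
  generalize qp q (q * (u * a)) = A at *
  generalize qp q ((q * a) ^ 2) = B at *
  obtain ⟨E, hE⟩ : ∃ E, E = 1 - u * a := ⟨_, rfl⟩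
  rw [← hE] at m1 ⊢
  field_simp
  rw [hE]
  ring

lemma GG_const (q u a : ℂ) (hq0 : 0 < ‖q‖) (hq : ‖q‖ < 1) (hu : u ^ 2 = q) (hu1 : ‖u‖ < 1)
    (ha : ‖a‖ < 1) : GG q u a = GG q u 0 := by
  let X := Metric.ball (0 : ℂ) 1
  have hb : ∀ x : X, ‖(x : ℂ)‖ < 1 := fun x => by
    have := x.2
    rwa [mem_ball_zero_iff] at this
  have hc : Continuous fun x : X => II q u x := by
    unfold II
    refine intervalIntegral.continuous_parametric_intervalIntegral_of_continuous' ?_ _ _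
    have h := qp_cont q hq
    have k1 : Continuous fun p : X × ℝ => hh q p.2 u := by
      unfold hh
      fun_prop
    have k2 : Continuous fun p : X × ℝ => hh q p.2 (p.1 : ℂ) := by
      unfold hh
      fun_prop
    exact Continuous.div k1 k2 fun p => hh_ne q hq p.2 p.1 (hb _)
  have hG : Continuous fun x : X => GG q u x := by
    have h := qp_cont q hq
    unfold GG
    have k1 : Continuous fun x : X => qp q ((x : ℂ) ^ 2) := by fun_prop
    have k2 : Continuous fun x : X => qp q (u * (x : ℂ)) ^ 2 := by fun_prop
    refine (hc.mul k1).div k2 fun x => ?_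
    refine pow_ne_zero _ (qp_ne_zero _ _ hq ?_)
    rw [norm_mul]; nlinarith [norm_nonneg (x : ℂ), norm_nonneg u, hb x]
  have hqn : ∀ n : ℕ, ‖q ^ n * a‖ < 1 := fun n => by
    rw [norm_mul, norm_pow]
    have := pow_le_one₀ (n := n) (norm_nonneg q) hq.le
    have := pow_nonneg (norm_nonneg q) n
    nlinarith [norm_nonneg a]
  have hit : ∀ n : ℕ, GG q u (q ^ n * a) = GG q u a := by
    intro n
    induction n with
    | zero => simp
    | succ k ih =>
      rw [pow_succ', mul_assoc, GG_step q u _ hq0 hq hu hu1 (hqn k), ih]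
  let s : ℕ → X := fun n => ⟨q ^ n * a, by simpa [X] using hqn n⟩
  let z : X := ⟨0, by simp [X]⟩
  have hs : Filter.Tendsto s Filter.atTop (nhds z) := by
    rw [tendsto_subtype_rng]
    simpa using (tendsto_pow_atTop_nhds_zero_of_norm_lt_one hq).mul_const a
  have ht := (hG.tendsto z).comp hs
  have ht' : Filter.Tendsto (fun _ : ℕ => GG q u a) Filter.atTop (nhds (GG q u 0)) := by
    refine ht.congr fun n => ?_
    exact hit n
  exact tendsto_nhds_unique tendsto_const_nhds ht'

theorem integral_step_one (q u a : ℂ) (hq0 : 0 < ‖q‖) (hq : ‖q‖ < 1) (hu : u ^ 2 = q)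
    (ha : ‖a‖ < 1) (ha0 : a ≠ 0) :
    ∫ θ in (0:ℝ)..Real.pi, hh q θ u / hh q θ a
      = (Real.pi : ℂ) * (qp q (u * a)) ^ 2 / (qp q q * qp q (a ^ 2)) := by
  have hu1 : ‖u‖ < 1 := by
    have : ‖u‖ ^ 2 < 1 := by rw [← norm_pow, hu]; exact hq
    nlinarith [norm_nonneg u]
  have h1 := GG_const q u a hq0 hq hu hu1 ha
  rw [← GG_const q u u hq0 hq hu hu1 hu1] at h1
  have hIu : II q u u = 2 * Real.pi := by
    unfold II
    have : ∀ θ : ℝ, hh q θ u / hh q θ u = 1 := fun θ => div_self (hh_ne q hq θ u hu1)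
    simp [this]
  have n0 := qp_ne_zero q q hq hq
  have n1 : qp q (a ^ 2) ≠ 0 := qp_ne_zero q _ hq (by
    rw [norm_pow]; nlinarith [norm_nonneg a])
  have n2 : qp q (u * a) ≠ 0 := qp_ne_zero q _ hq (by
    rw [norm_mul]; nlinarith [norm_nonneg a, norm_nonneg u])
  rw [GG, GG, hIu, ← pow_two, hu, II_half q u a hq ha] at h1
  generalize (∫ θ in (0:ℝ)..Real.pi, hh q θ u / hh q θ a) = J at *
  generalize qp q (u * a) = A at *
  generalize qp q (a ^ 2) = B at *
  generalize qp q q = C at *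
  field_simp at h1 ⊢
  linear_combination h1
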